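/- Define κ(s,x,t,y) = (4π)^{−1/2}(t−s+y−x)^{−3/2} if t > s and y > x, and 0 otherwise. Let 0 < p < 1/2, c > 0, and let q : ℝ² → [0,∞) be measurable with q(u,z) ≤ c·(u+z)^{−p} for u, z > 0 and q(u,z) = 0 if u ≤ 0 or z ≤ 0. For measurable g : ℝ² → [0,∞] let Kg(s,x) = ∫_{ℝ²} κ(s,x,u,z)·q(u,z)·g(u,z) dz du. Fix t, y ∈ ℝ with t + y > 0 and set f(s,x) = κ(s,x,t,y). Let h > 0 satisfy η := 2√2·c·[B(1/2−p, 1) + B(1/2, 1−p)]·h^{1/2−p} < 1, where B is the Euler beta function, let k ≥ 1 be the integer with (k−1)h ≤ t+y < kh, and for j = 0, …, k set a_j = (k−j)h, A_j = {(u,z) ∈ ℝ² : u + z ≥ a_j} for 1 ≤ j ≤ k−1, A₀ = ∅, A_k = ℝ², and S_j = A_j \ A_{j−1}. Then for every j = 1, …, k and every (s,x) ∈ S_j with s < t and x < y: Σ_{m=0}^∞ K^m f(s,x) ≤ (1/(1−η))^j · κ(s,x,t,y). -/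

import Mathlib

open MeasureTheory
open scoped ENNReal NNReal

/-- The potential kernel of two independent 1/2-stable subordinators (as an `ℝ≥0∞`-valued
kernel): `κ(s,x,t,y) = (4π)^{−1/2}(t−s+y−x)^{−3/2}` if `t > s` and `y > x`, else `0`. -/
noncomputable def kappaKerE (s x t y : ℝ) : ℝ≥0∞ :=
  if s < t ∧ x < y then
    ENNReal.ofReal ((4 * Real.pi) ^ (-(1:ℝ)/2) * (t - s + y - x) ^ (-(3:ℝ)/2))
  else 0

/-- The operator `Kg(s,x) = ∫_{ℝ²} κ(s,x,u,z) q(u,z) g(u,z) dz du`. -/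
noncomputable def kappaOp (q : ℝ × ℝ → ℝ) (g : ℝ × ℝ → ℝ≥0∞) : ℝ × ℝ → ℝ≥0∞ :=
  fun sx => ∫⁻ w : ℝ × ℝ, kappaKerE sx.1 sx.2 w.1 w.2 * ENNReal.ofReal (q w) * g w

/-- The Euler beta function `B(a,b) = ∫_0^1 v^{a−1}(1−v)^{b−1} dv`. -/
noncomputable def eulerBeta (a b : ℝ) : ℝ :=
  ∫ v in (0:ℝ)..1, v ^ (a - 1) * (1 - v) ^ (b - 1)

/-!
If `u` is a supersolution, `f + K u ≤ u`, then `∑ₘ Kᵐ f ≤ u`. For an integral operator that never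
raises an integer level `ℓ`, and for which the part of `K f` coming from a single level is at most
`η f`, the function `u = (1 - η)^{-(ℓ + 1)} f` is a supersolution, by summing a geometric series
over the levels.

For `κ`, take the level of `(u, z)` to be the number of its slice, counted downwards from the slice
of `(t, y)`. With `a = u + z - s - x` and `b = t + y - u - z`, the one-level bound comes from the
3G-type inequality `a ^ (-3/2) * b ^ (-3/2) ≤ 2√2 (a + b) ^ (-3/2) * (min a b) ^ (-3/2)`: on a line
`u + z = v` the segment where `κ(s,x,u,z) κ(u,z,t,y) ≠ 0` has length at most `min a b`, so
integrating over these lines leaves two beta integrals over an interval of length at most `h`.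
-/

section Supersolution

theorem sum_iterate_le_of_add_le {M : Type*} [AddCommMonoid M] [PartialOrder M]
    [IsOrderedAddMonoid M] [CanonicallyOrderedAdd M] {T : M → M} (hmono : Monotone T)
    (hadd : ∀ g g', T g + T g' ≤ T (g + g')) {f u : M} (hu : f + T u ≤ u) (n : ℕ) :
    ∑ m ∈ Finset.range n, T^[m] f ≤ u := by
  have sum_map_le (g : ℕ → M) (n : ℕ) :
      ∑ m ∈ Finset.range n, T (g m) ≤ T (∑ m ∈ Finset.range n, g m) := by
    induction n with
    | zero => simp
    | succ n ih =>
      simp only [Finset.sum_range_succ]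
      exact (add_le_add_left ih _).trans (hadd _ _)
  induction n with
  | zero => simp
  | succ n ih =>
    calc ∑ m ∈ Finset.range (n + 1), T^[m] f
        = f + ∑ m ∈ Finset.range n, T (T^[m] f) := by
          simp only [Finset.sum_range_succ', Function.iterate_succ_apply',
            Function.iterate_zero_apply, add_comm]
      _ ≤ f + T (∑ m ∈ Finset.range n, T^[m] f) := by gcongr; exact sum_map_le _ n
      _ ≤ f + T u := by gcongr; exact hmono ih
      _ ≤ u := hu

theorem one_add_mul_sum_inv_one_sub_pow {η : ℝ≥0∞} (hη : η < 1) (n : ℕ) :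
    1 + η * ∑ i ∈ Finset.range n, (1 - η)⁻¹ ^ (i + 1) = (1 - η)⁻¹ ^ n := by
  have hfix : 1 + η * (1 - η)⁻¹ = (1 - η)⁻¹ := by
    calc 1 + η * (1 - η)⁻¹ = (1 - η) * (1 - η)⁻¹ + η * (1 - η)⁻¹ := by
          rw [ENNReal.mul_inv_cancel (tsub_pos_of_lt hη).ne' (by finiteness)]
      _ = (1 - η)⁻¹ := by rw [← add_mul, tsub_add_cancel_of_le hη.le, one_mul]
  induction n with
  | zero => simp
  | succ n ih =>
    calc 1 + η * ∑ i ∈ Finset.range (n + 1), (1 - η)⁻¹ ^ (i + 1)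
        = (1 - η)⁻¹ ^ n + η * (1 - η)⁻¹ ^ (n + 1) := by
          rw [Finset.sum_range_succ, mul_add, ← add_assoc, ih]
      _ = (1 - η)⁻¹ ^ n * (1 + η * (1 - η)⁻¹) := by ring
      _ = (1 - η)⁻¹ ^ (n + 1) := by rw [hfix, pow_succ]

theorem ofReal_one_div_one_sub_pow {η : ℝ} (hη_nonneg : 0 ≤ η) (hη : η < 1) (n : ℕ) :
    ENNReal.ofReal ((1 / (1 - η)) ^ n) = (1 - ENNReal.ofReal η)⁻¹ ^ n := by
  rw [one_div, ENNReal.ofReal_pow (inv_nonneg.2 (sub_nonneg.2 hη.le)),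
    ENNReal.ofReal_inv_of_pos (sub_pos.2 hη), ENNReal.ofReal_sub 1 hη_nonneg, ENNReal.ofReal_one]

end Supersolution

section KernelOperator

variable {X : Type*} [MeasurableSpace X] {μ : Measure X} {k : X → X → ℝ≥0∞}

/-- The integral operator with kernel `k` with respect to `μ`. Neither `k` nor the argument `g` is
required to be measurable, so the operator is in general only superadditive. -/
noncomputable def kernelOp (μ : Measure X) (k : X → X → ℝ≥0∞) (g : X → ℝ≥0∞) : X → ℝ≥0∞ :=
  fun x => ∫⁻ w, k x w * g w ∂μ

theorem kernelOp_mono : Monotone (kernelOp μ k) :=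
  fun _ _ hg _ => lintegral_mono fun w => mul_le_mul_right (hg w) _

theorem kernelOp_add_le (g g' : X → ℝ≥0∞) :
    kernelOp μ k g + kernelOp μ k g' ≤ kernelOp μ k (g + g') := fun x => by
  simpa only [kernelOp, Pi.add_apply, mul_add] using le_lintegral_add _ _

theorem tsum_iterate_kernelOp_le_of_add_le {f u : X → ℝ≥0∞} (hu : f + kernelOp μ k u ≤ u) (x : X) :
    ∑' m : ℕ, (kernelOp μ k)^[m] f x ≤ u x := by
  rw [ENNReal.tsum_eq_iSup_nat]
  refine iSup_le fun n => ?_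
  simpa only [Finset.sum_apply] using sum_iterate_le_of_add_le kernelOp_mono kernelOp_add_le hu n x

theorem lintegral_eq_sum_setLIntegral_level {ℓ : X → ℕ} (hℓ : Measurable ℓ) {F : X → ℝ≥0∞} {N : ℕ}
    (hF : ∀ w, F w ≠ 0 → ℓ w < N) :
    ∫⁻ w, F w ∂μ = ∑ n ∈ Finset.range N, ∫⁻ w in ℓ ⁻¹' {n}, F w ∂μ := by
  have hsupp : F.support ⊆ ⋃ n ∈ Finset.range N, ℓ ⁻¹' {n} := fun w hw => by
    simpa using hF w hw
  rw [← setLIntegral_eq_of_support_subset hsupp]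
  exact lintegral_biUnion_finset (Set.pairwiseDisjoint_fiber ℓ _)
    (fun n _ => hℓ (measurableSet_singleton n)) F

theorem add_kernelOp_inv_one_sub_pow_level_le {ℓ : X → ℕ} (hℓ : Measurable ℓ)
    (hk : ∀ x w, k x w ≠ 0 → ℓ w ≤ ℓ x) {f : X → ℝ≥0∞} {η : ℝ≥0∞} (hη : η < 1)
    (hlevel : ∀ n x, ∫⁻ w in ℓ ⁻¹' {n}, k x w * f w ∂μ ≤ η * f x) :
    f + kernelOp μ k (fun w => (1 - η)⁻¹ ^ (ℓ w + 1) * f w) ≤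
      fun w => (1 - η)⁻¹ ^ (ℓ w + 1) * f w := fun x => by
  have hr : (1 - η)⁻¹ ≠ ∞ := ENNReal.inv_ne_top.2 (tsub_pos_of_lt hη).ne'
  have level_le (n : ℕ) : ∫⁻ w in ℓ ⁻¹' {n}, k x w * ((1 - η)⁻¹ ^ (ℓ w + 1) * f w) ∂μ ≤
      (1 - η)⁻¹ ^ (n + 1) * (η * f x) := by
    calc ∫⁻ w in ℓ ⁻¹' {n}, k x w * ((1 - η)⁻¹ ^ (ℓ w + 1) * f w) ∂μ
        = ∫⁻ w in ℓ ⁻¹' {n}, (1 - η)⁻¹ ^ (n + 1) * (k x w * f w) ∂μ := by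
          refine setLIntegral_congr_fun (hℓ (measurableSet_singleton n)) ?_
          rintro w rfl
          exact mul_left_comm _ _ _
      _ = (1 - η)⁻¹ ^ (n + 1) * ∫⁻ w in ℓ ⁻¹' {n}, k x w * f w ∂μ :=
          lintegral_const_mul' _ _ (ENNReal.pow_ne_top hr)
      _ ≤ (1 - η)⁻¹ ^ (n + 1) * (η * f x) := by gcongr; exact hlevel n x
  calc f x + ∫⁻ w, k x w * ((1 - η)⁻¹ ^ (ℓ w + 1) * f w) ∂μ
      = f x + ∑ n ∈ Finset.range (ℓ x + 1),
          ∫⁻ w in ℓ ⁻¹' {n}, k x w * ((1 - η)⁻¹ ^ (ℓ w + 1) * f w) ∂μ := by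
        rw [lintegral_eq_sum_setLIntegral_level hℓ fun w hw =>
          Nat.lt_succ_of_le (hk x w (left_ne_zero_of_mul hw))]
    _ ≤ f x + ∑ n ∈ Finset.range (ℓ x + 1), (1 - η)⁻¹ ^ (n + 1) * (η * f x) := by
        gcongr with n; exact level_le n
    _ = (1 + η * ∑ n ∈ Finset.range (ℓ x + 1), (1 - η)⁻¹ ^ (n + 1)) * f x := by
        rw [← Finset.sum_mul]; ring
    _ = (1 - η)⁻¹ ^ (ℓ x + 1) * f x := by rw [one_add_mul_sum_inv_one_sub_pow hη]

theorem tsum_iterate_kernelOp_le_of_level {ℓ : X → ℕ} (hℓ : Measurable ℓ)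
    (hk : ∀ x w, k x w ≠ 0 → ℓ w ≤ ℓ x) {f : X → ℝ≥0∞} {η : ℝ≥0∞} (hη : η < 1)
    (hlevel : ∀ n x, ∫⁻ w in ℓ ⁻¹' {n}, k x w * f w ∂μ ≤ η * f x) (x : X) :
    ∑' m : ℕ, (kernelOp μ k)^[m] f x ≤ (1 - η)⁻¹ ^ (ℓ x + 1) * f x :=
  tsum_iterate_kernelOp_le_of_add_le (add_kernelOp_inv_one_sub_pow_level_le hℓ hk hη hlevel) x

end KernelOperator

section EulerBeta

theorem eulerBeta_comm (a b : ℝ) : eulerBeta a b = eulerBeta b a := by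
  have hsubst := intervalIntegral.integral_comp_sub_left (a := 0) (b := 1)
    (fun v : ℝ => v ^ (b - 1) * (1 - v) ^ (a - 1)) 1
  simpa only [eulerBeta, sub_self, sub_zero, sub_sub_cancel, mul_comm] using hsubst

theorem eulerBeta_nonneg (a b : ℝ) : 0 ≤ eulerBeta a b :=
  intervalIntegral.integral_nonneg zero_le_one fun _ hv =>
    mul_nonneg (Real.rpow_nonneg hv.1 _) (Real.rpow_nonneg (sub_nonneg.2 hv.2) _)

theorem intervalIntegrable_eulerBeta {a b : ℝ} (ha : 0 < a) (hb : 0 < b) :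
    IntervalIntegrable (fun v : ℝ => v ^ (a - 1) * (1 - v) ^ (b - 1)) volume 0 1 := by
  have hconv := Complex.betaIntegral_convergent (u := a) (v := b) (by simpa) (by simpa)
  refine hconv.norm.congr_uIoo fun v hv => ?_
  rw [Set.uIoo_of_le zero_le_one] at hv
  have hcast : (1 - v : ℂ) = ((1 - v : ℝ) : ℂ) := by push_cast; rfl
  simp only [norm_mul, hcast, Complex.norm_cpow_eq_rpow_re_of_pos hv.1,
    Complex.norm_cpow_eq_rpow_re_of_pos (sub_pos.2 hv.2), Complex.sub_re, Complex.ofReal_re,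
    Complex.one_re]

theorem setLIntegral_Ioo_zero_one_eq_eulerBeta {a b : ℝ} (ha : 0 < a) (hb : 0 < b) :
    ∫⁻ v in Set.Ioo (0 : ℝ) 1, ENNReal.ofReal (v ^ (a - 1) * (1 - v) ^ (b - 1)) =
      ENNReal.ofReal (eulerBeta a b) := by
  have hint := (intervalIntegrable_iff_integrableOn_Ioo_of_le zero_le_one).1
    (intervalIntegrable_eulerBeta ha hb)
  rw [eulerBeta, intervalIntegral.integral_of_le zero_le_one, integral_Ioc_eq_integral_Ioo,
    ofReal_integral_eq_lintegral_ofReal hint]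
  filter_upwards [ae_restrict_mem measurableSet_Ioo] with v hv
  exact mul_nonneg (Real.rpow_nonneg hv.1.le _) (Real.rpow_nonneg (sub_nonneg.2 hv.2.le) _)

theorem setLIntegral_Ioo_eq_eulerBeta {a b : ℝ} (ha : 0 < a) (hb : 0 < b) {α β : ℝ}
    (hαβ : α < β) :
    ∫⁻ v in Set.Ioo α β, ENNReal.ofReal ((v - α) ^ (a - 1) * (β - v) ^ (b - 1)) =
      ENNReal.ofReal ((β - α) ^ (a + b - 1) * eulerBeta a b) := by
  obtain ⟨L, hL, rfl⟩ : ∃ L > 0, β = L + α := ⟨β - α, sub_pos.2 hαβ, by ring⟩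
  have himage : (fun v => L * v + α) '' Set.Ioo 0 1 = Set.Ioo α (L + α) := by
    simpa using Set.image_affine_Ioo hL α 0 1
  have hderiv (v : ℝ) : HasDerivWithinAt (fun v => L * v + α) L (Set.Ioo 0 1) v := by
    simpa using (((hasDerivAt_id v).const_mul L).add_const α).hasDerivWithinAt
  have hinj : Set.InjOn (fun v => L * v + α) (Set.Ioo 0 1) :=
    ((add_left_injective α).comp (mul_right_injective₀ hL.ne')).injOn
  have hscale {v : ℝ} (hv : v ∈ Set.Ioo (0 : ℝ) 1) :
      L * ((L * v) ^ (a - 1) * (L * (1 - v)) ^ (b - 1)) =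
        L ^ (a + b - 1) * (v ^ (a - 1) * (1 - v) ^ (b - 1)) := by
    rw [Real.mul_rpow hL.le hv.1.le, Real.mul_rpow hL.le (sub_nonneg.2 hv.2.le),
      show a + b - 1 = 1 + (a - 1) + (b - 1) by ring, Real.rpow_add hL, Real.rpow_add hL,
      Real.rpow_one]
    ring
  rw [← himage, lintegral_image_eq_lintegral_abs_deriv_mul measurableSet_Ioo
    (fun v _ => hderiv v) hinj, add_sub_cancel_right, ENNReal.ofReal_mul (by positivity),
    ← setLIntegral_Ioo_zero_one_eq_eulerBeta ha hb, ← lintegral_const_mul _ (by fun_prop)]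
  refine setLIntegral_congr_fun measurableSet_Ioo fun v hv => ?_
  rw [abs_of_pos hL, ← ENNReal.ofReal_mul hL.le, ← ENNReal.ofReal_mul (by positivity), ← hscale hv,
    add_sub_cancel_right, show L + α - (L * v + α) = L * (1 - v) by ring]

end EulerBeta

section PowerEstimates

theorem rpow_neg_mul_rpow_neg_le {a b γ : ℝ} (ha : 0 < a) (hb : 0 < b) (hγ : 0 ≤ γ) :
    a ^ (-γ) * b ^ (-γ) ≤ 2 ^ γ * (a + b) ^ (-γ) * min a b ^ (-γ) := by
  have hmin : 0 < min a b := lt_min ha hb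
  have half_le_max : (a + b) / 2 ≤ max a b := by
    linarith [le_max_left a b, le_max_right a b]
  calc a ^ (-γ) * b ^ (-γ) = max a b ^ (-γ) * min a b ^ (-γ) := by
        rw [← Real.mul_rpow ha.le hb.le, ← max_mul_min, Real.mul_rpow (by positivity) hmin.le]
    _ ≤ ((a + b) / 2) ^ (-γ) * min a b ^ (-γ) := by
        gcongr ?_ * _
        exact Real.rpow_le_rpow_of_nonpos (by positivity) half_le_max (neg_nonpos.2 hγ)
    _ = 2 ^ γ * (a + b) ^ (-γ) * min a b ^ (-γ) := by
        rw [Real.div_rpow (by positivity) zero_le_two, Real.rpow_neg zero_le_two, div_inv_eq_mul,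
          mul_comm (2 ^ γ)]

theorem min_rpow_neg_le_add {a b a' b' θ : ℝ} (ha : 0 < a) (hb : 0 < b) (haa' : a ≤ a')
    (hbb' : b ≤ b') (hθ : 0 ≤ θ) : min a' b' ^ (-θ) ≤ a ^ (-θ) + b ^ (-θ) := by
  rcases min_choice a' b' with hmin | hmin <;> rw [hmin]
  · exact le_add_of_le_of_nonneg (Real.rpow_le_rpow_of_nonpos ha haa' (neg_nonpos.2 hθ))
      (by positivity)
  · exact le_add_of_nonneg_of_le (by positivity)
      (Real.rpow_le_rpow_of_nonpos hb hbb' (neg_nonpos.2 hθ))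

variable {p θ σ τ α β h : ℝ}

theorem rpow_neg_mul_min_rpow_neg_le (hp : 0 ≤ p) (hθ : 0 ≤ θ) (hα : 0 ≤ α) (hσα : σ ≤ α)
    (hβτ : β ≤ τ) {v : ℝ} (hv : v ∈ Set.Ioo α β) :
    v ^ (-p) * min (v - σ) (τ - v) ^ (-θ) ≤
      (v - α) ^ ((1 - p - θ) - 1) * (β - v) ^ ((1 : ℝ) - 1) +
        (v - α) ^ ((1 - p) - 1) * (β - v) ^ ((1 - θ) - 1) := by
  have hvα : 0 < v - α := sub_pos.2 hv.1
  have hβv : 0 < β - v := sub_pos.2 hv.2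
  calc v ^ (-p) * min (v - σ) (τ - v) ^ (-θ)
      ≤ (v - α) ^ (-p) * ((v - α) ^ (-θ) + (β - v) ^ (-θ)) := by
        have hmin : 0 ≤ min (v - σ) (τ - v) := le_min (by linarith) (by linarith)
        gcongr ?_ * ?_
        · exact Real.rpow_le_rpow_of_nonpos hvα (by linarith) (neg_nonpos.2 hp)
        · exact min_rpow_neg_le_add hvα hβv (by linarith) (by linarith) hθ
    _ = _ := by
        rw [mul_add, ← Real.rpow_add hvα, sub_self, Real.rpow_zero, mul_one]
        ring_nf

theorem setLIntegral_Ioo_rpow_neg_mul_min_rpow_neg_le (hp : 0 ≤ p) (hθ : 0 ≤ θ) (hpθ : p + θ < 1)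
    (hα : 0 ≤ α) (hσα : σ ≤ α) (hβτ : β ≤ τ) (hβα : β - α ≤ h) :
    ∫⁻ v in Set.Ioo α β, ENNReal.ofReal (v ^ (-p) * min (v - σ) (τ - v) ^ (-θ)) ≤
      ENNReal.ofReal ((eulerBeta (1 - p - θ) 1 + eulerBeta (1 - θ) (1 - p)) * h ^ (1 - p - θ)) := by
  rcases le_or_gt β α with hle | hαβ
  · simp [Set.Ioo_eq_empty_of_le hle]
  have hB₁ := eulerBeta_nonneg (1 - p - θ) 1
  have hB₂ := eulerBeta_nonneg (1 - θ) (1 - p)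
  calc ∫⁻ v in Set.Ioo α β, ENNReal.ofReal (v ^ (-p) * min (v - σ) (τ - v) ^ (-θ))
      ≤ ∫⁻ v in Set.Ioo α β,
          (ENNReal.ofReal ((v - α) ^ ((1 - p - θ) - 1) * (β - v) ^ ((1 : ℝ) - 1)) +
            ENNReal.ofReal ((v - α) ^ ((1 - p) - 1) * (β - v) ^ ((1 - θ) - 1))) :=
        setLIntegral_mono' measurableSet_Ioo fun v hv =>
          (ENNReal.ofReal_le_ofReal
            (rpow_neg_mul_min_rpow_neg_le hp hθ hα hσα hβτ hv)).trans ENNReal.ofReal_add_le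
    _ = ENNReal.ofReal
          ((eulerBeta (1 - p - θ) 1 + eulerBeta (1 - θ) (1 - p)) * (β - α) ^ (1 - p - θ)) := by
        rw [lintegral_add_left (by fun_prop),
          setLIntegral_Ioo_eq_eulerBeta (by linarith) one_pos hαβ,
          setLIntegral_Ioo_eq_eulerBeta (by linarith) (by linarith) hαβ,
          eulerBeta_comm (1 - p) (1 - θ), ← ENNReal.ofReal_add (by positivity) (by positivity)]
        ring_nf
    _ ≤ _ := by
        gcongr
        linarith

theorem setLIntegral_Icc_min_mul_rpow_neg_le (hp : 0 ≤ p) (hθ : 0 ≤ θ) (hpθ : p + θ < 1)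
    (hα : 0 ≤ α) :
    ∫⁻ v in Set.Icc α (α + h), ENNReal.ofReal (min (v - σ) (τ - v)) *
        ENNReal.ofReal (v ^ (-p) * min (v - σ) (τ - v) ^ (-(1 + θ))) ≤
      ENNReal.ofReal ((eulerBeta (1 - p - θ) 1 + eulerBeta (1 - θ) (1 - p)) * h ^ (1 - p - θ)) := by
  have integrand_le (v : ℝ) : ENNReal.ofReal (min (v - σ) (τ - v)) *
      ENNReal.ofReal (v ^ (-p) * min (v - σ) (τ - v) ^ (-(1 + θ))) ≤
        (Set.Icc σ τ).indicator
          (fun v => ENNReal.ofReal (v ^ (-p) * min (v - σ) (τ - v) ^ (-θ))) v := by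
    rcases le_or_gt (min (v - σ) (τ - v)) 0 with hmin | hmin
    · simp [ENNReal.ofReal_of_nonpos hmin]
    have hv : v ∈ Set.Icc σ τ :=
      ⟨(sub_pos.1 (hmin.trans_le (min_le_left _ _))).le,
        (sub_pos.1 (hmin.trans_le (min_le_right _ _))).le⟩
    rw [Set.indicator_of_mem hv, ← ENNReal.ofReal_mul hmin.le, mul_left_comm, neg_add,
      Real.rpow_add hmin, Real.rpow_neg_one, mul_inv_cancel_left₀ hmin.ne']
  calc _ ≤ ∫⁻ v in Set.Icc α (α + h), (Set.Icc σ τ).indicator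
          (fun v => ENNReal.ofReal (v ^ (-p) * min (v - σ) (τ - v) ^ (-θ))) v :=
        lintegral_mono integrand_le
    _ = ∫⁻ v in Set.Ioo (max σ α) (min τ (α + h)),
          ENNReal.ofReal (v ^ (-p) * min (v - σ) (τ - v) ^ (-θ)) := by
        rw [setLIntegral_indicator measurableSet_Icc, Set.Icc_inter_Icc,
          setLIntegral_congr Ioo_ae_eq_Icc]
    _ ≤ _ := by
        refine setLIntegral_Ioo_rpow_neg_mul_min_rpow_neg_le hp hθ hpθ (le_max_of_le_right hα)
          (le_max_left _ _) (min_le_left _ _) ?_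
        linarith [le_max_right σ α, min_le_right τ (α + h)]

end PowerEstimates

section Shear

theorem lintegral_prod_eq_lintegral_lintegral_sub {G : Type*} [AddGroup G] [MeasurableSpace G]
    [MeasurableAdd₂ G] [MeasurableNeg G] (μ ν : Measure G) [SFinite μ] [SFinite ν]
    [μ.IsAddRightInvariant] {F : G × G → ℝ≥0∞} (hF : Measurable F) :
    ∫⁻ w, F w ∂(ν.prod μ) = ∫⁻ v, ∫⁻ u, F (u, v - u) ∂ν ∂μ := by
  have hshear := measurePreserving_prod_sub_swap μ ν
  rw [← hshear.lintegral_comp hF]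
  exact lintegral_prod _ (hF.comp hshear.measurable).aemeasurable

variable {s x t y : ℝ}

theorem volume_setOf_mem_Ioo_and_sub_mem_Ioo_le (v : ℝ) :
    volume {u | u ∈ Set.Ioo s t ∧ v - u ∈ Set.Ioo x y} ≤
      ENNReal.ofReal (min (v - (s + x)) (t + y - v)) := by
  have hsub : {u | u ∈ Set.Ioo s t ∧ v - u ∈ Set.Ioo x y} ⊆
      Set.Ioo (max s (v - y)) (min t (v - x)) := by
    rintro u ⟨⟨hsu, hut⟩, hxv, hvy⟩
    exact ⟨max_lt hsu (by linarith), lt_min hut (by linarith)⟩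
  refine (measure_mono hsub).trans ?_
  rw [Real.volume_Ioo]
  refine ENNReal.ofReal_le_ofReal (le_min ?_ ?_)
  · linarith [min_le_right t (v - x), le_max_left s (v - y)]
  · linarith [min_le_left t (v - x), le_max_right s (v - y)]

theorem setLIntegral_Ioo_prod_Ioo_comp_add_le {φ : ℝ → ℝ≥0∞} (hφ : Measurable φ) :
    ∫⁻ w in Set.Ioo s t ×ˢ Set.Ioo x y, φ (w.1 + w.2) ≤
      ∫⁻ v, ENNReal.ofReal (min (v - (s + x)) (t + y - v)) * φ v := by
  have hbox : MeasurableSet (Set.Ioo s t ×ˢ Set.Ioo x y) := measurableSet_Ioo.prod measurableSet_Ioo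
  have hF : Measurable ((Set.Ioo s t ×ˢ Set.Ioo x y).indicator fun w => φ (w.1 + w.2)) :=
    (hφ.comp measurable_add).indicator hbox
  rw [← lintegral_indicator hbox, Measure.volume_eq_prod,
    lintegral_prod_eq_lintegral_lintegral_sub volume volume hF]
  refine lintegral_mono fun v => ?_
  have hsegment : MeasurableSet {u | u ∈ Set.Ioo s t ∧ v - u ∈ Set.Ioo x y} :=
    measurableSet_Ioo.inter ((measurable_const_sub v) measurableSet_Ioo)
  calc ∫⁻ u, (Set.Ioo s t ×ˢ Set.Ioo x y).indicator (fun w => φ (w.1 + w.2)) (u, v - u)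
      = ∫⁻ u, {u | u ∈ Set.Ioo s t ∧ v - u ∈ Set.Ioo x y}.indicator (fun _ => φ v) u := by
        simp [Set.indicator_apply]
    _ = φ v * volume {u | u ∈ Set.Ioo s t ∧ v - u ∈ Set.Ioo x y} :=
        lintegral_indicator_const hsegment _
    _ ≤ ENNReal.ofReal (min (v - (s + x)) (t + y - v)) * φ v := by
        rw [mul_comm]
        gcongr
        exact volume_setOf_mem_Ioo_and_sub_mem_Ioo_le v

end Shear

section PotentialKernel

variable {s x t y u z : ℝ}

theorem kappaKerE_of_lt (hst : s < t) (hxy : x < y) :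
    kappaKerE s x t y =
      ENNReal.ofReal ((4 * Real.pi) ^ (-(1 : ℝ) / 2) * (t - s + y - x) ^ (-(3 / 2 : ℝ))) := by
  rw [kappaKerE, if_pos ⟨hst, hxy⟩, neg_div 2 (3 : ℝ)]

theorem lt_and_lt_of_kappaKerE_ne_zero (hne : kappaKerE s x t y ≠ 0) : s < t ∧ x < y := by
  by_contra hlt
  exact hne (if_neg hlt)

theorem kappaKerE_mul_kappaKerE_le (s x u z t y : ℝ) :
    kappaKerE s x u z * kappaKerE u z t y ≤ kappaKerE s x t y *
      ENNReal.ofReal (2 * √2 * min (u + z - (s + x)) (t + y - (u + z)) ^ (-(3 / 2 : ℝ))) := by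
  by_cases hne : kappaKerE s x u z * kappaKerE u z t y = 0
  · simp [hne]
  obtain ⟨hsu, hxz⟩ := lt_and_lt_of_kappaKerE_ne_zero (left_ne_zero_of_mul hne)
  obtain ⟨hut, hzy⟩ := lt_and_lt_of_kappaKerE_ne_zero (right_ne_zero_of_mul hne)
  rw [kappaKerE_of_lt hsu hxz, kappaKerE_of_lt hut hzy,
    kappaKerE_of_lt (hsu.trans hut) (hxz.trans hzy)]
  set D := (4 * Real.pi) ^ (-(1 : ℝ) / 2)
  have hD : D ≤ 1 :=
    Real.rpow_le_one_of_one_le_of_nonpos (by linarith [Real.pi_gt_three]) (by norm_num)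
  obtain ⟨a, ha_def⟩ : ∃ a, a = u + z - (s + x) := ⟨_, rfl⟩
  obtain ⟨b, hb_def⟩ : ∃ b, b = t + y - (u + z) := ⟨_, rfl⟩
  have ha : 0 < a := by linarith
  have hb : 0 < b := by linarith
  rw [← ha_def, ← hb_def, show u - s + z - x = a by linarith, show t - u + y - z = b by linarith,
    show t - s + y - x = a + b by linarith, ← ENNReal.ofReal_mul (by positivity),
    ← ENNReal.ofReal_mul (by positivity)]
  have two_rpow : (2 : ℝ) ^ (3 / 2 : ℝ) = 2 * √2 := by
    rw [Real.sqrt_eq_rpow, ← Real.rpow_one_add' zero_le_two (by norm_num)]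
    norm_num
  apply ENNReal.ofReal_le_ofReal
  calc D * a ^ (-(3 / 2 : ℝ)) * (D * b ^ (-(3 / 2 : ℝ)))
      = D * (D * (a ^ (-(3 / 2 : ℝ)) * b ^ (-(3 / 2 : ℝ)))) := by ring
    _ ≤ D * (1 * (2 ^ (3 / 2 : ℝ) * (a + b) ^ (-(3 / 2 : ℝ)) * min a b ^ (-(3 / 2 : ℝ)))) := by
        have h3G := rpow_neg_mul_rpow_neg_le ha hb (γ := 3 / 2) (by norm_num)
        gcongr
    _ = D * (a + b) ^ (-(3 / 2 : ℝ)) * (2 * √2 * min a b ^ (-(3 / 2 : ℝ))) := by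
        rw [two_rpow]; ring

variable {p c α h : ℝ} {q : ℝ × ℝ → ℝ}

theorem kappaKerE_mul_potential_mul_kappaKerE_le (hc : 0 ≤ c) {w : ℝ × ℝ}
    (hq : q w ≤ c * (w.1 + w.2) ^ (-p)) :
    kappaKerE s x w.1 w.2 * ENNReal.ofReal (q w) * kappaKerE w.1 w.2 t y ≤
      (Set.Ioo s t ×ˢ Set.Ioo x y).indicator (fun w => ENNReal.ofReal (2 * √2 * c) *
        kappaKerE s x t y * ENNReal.ofReal ((w.1 + w.2) ^ (-p) *
          min (w.1 + w.2 - (s + x)) (t + y - (w.1 + w.2)) ^ (-(1 + 1 / 2 : ℝ)))) w := by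
  obtain ⟨u, z⟩ := w
  by_cases hzero : kappaKerE s x u z * kappaKerE u z t y = 0
  · simp [mul_right_comm, hzero]
  obtain ⟨hsu, hxz⟩ := lt_and_lt_of_kappaKerE_ne_zero (left_ne_zero_of_mul hzero)
  obtain ⟨hut, hzy⟩ := lt_and_lt_of_kappaKerE_ne_zero (right_ne_zero_of_mul hzero)
  have hbox : (u, z) ∈ Set.Ioo s t ×ˢ Set.Ioo x y := ⟨⟨hsu, hut⟩, hxz, hzy⟩
  rw [Set.indicator_of_mem hbox]
  dsimp only at hq ⊢
  obtain ⟨m, hm⟩ : ∃ m, m = min (u + z - (s + x)) (t + y - (u + z)) := ⟨_, rfl⟩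
  have hm_nonneg : 0 ≤ m := by rw [hm]; exact le_min (by linarith) (by linarith)
  have h3G := kappaKerE_mul_kappaKerE_le s x u z t y
  rw [← hm] at h3G ⊢
  calc kappaKerE s x u z * ENNReal.ofReal (q (u, z)) * kappaKerE u z t y
      = kappaKerE s x u z * kappaKerE u z t y * ENNReal.ofReal (q (u, z)) := mul_right_comm _ _ _
    _ ≤ kappaKerE s x t y * ENNReal.ofReal (2 * √2 * m ^ (-(3 / 2 : ℝ))) *
          ENNReal.ofReal (c * (u + z) ^ (-p)) := by gcongr
    _ = kappaKerE s x t y *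
          ENNReal.ofReal (2 * √2 * c * ((u + z) ^ (-p) * m ^ (-(1 + 1 / 2 : ℝ)))) := by
        rw [mul_assoc, ← ENNReal.ofReal_mul (by positivity),
          show (3 / 2 : ℝ) = 1 + 1 / 2 by norm_num]
        ring_nf
    _ = _ := by rw [ENNReal.ofReal_mul (by positivity), mul_left_comm, ← mul_assoc]

theorem setLIntegral_strip_kappaKerE_mul_le (hp : 0 ≤ p) (hp' : p < 1 / 2) (hc : 0 ≤ c)
    (hα : 0 ≤ α) (hq : ∀ w : ℝ × ℝ, 0 ≤ w.1 + w.2 → q w ≤ c * (w.1 + w.2) ^ (-p)) :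
    ∫⁻ w in {w : ℝ × ℝ | w.1 + w.2 ∈ Set.Icc α (α + h)},
        kappaKerE s x w.1 w.2 * ENNReal.ofReal (q w) * kappaKerE w.1 w.2 t y ≤
      ENNReal.ofReal (2 * √2 * c * (eulerBeta (1 / 2 - p) 1 + eulerBeta (1 / 2) (1 - p))
        * h ^ (1 / 2 - p)) * kappaKerE s x t y := by
  set m : ℝ → ℝ := fun v => min (v - (s + x)) (t + y - v)
  set φ : ℝ → ℝ≥0∞ := (Set.Icc α (α + h)).indicator fun v =>
    ENNReal.ofReal (v ^ (-p) * m v ^ (-(1 + 1 / 2 : ℝ)))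
  set C := ENNReal.ofReal (2 * √2 * c) * kappaKerE s x t y
  have hstrip : MeasurableSet {w : ℝ × ℝ | w.1 + w.2 ∈ Set.Icc α (α + h)} :=
    measurable_add measurableSet_Icc
  have hbox : MeasurableSet (Set.Ioo s t ×ˢ Set.Ioo x y) := measurableSet_Ioo.prod measurableSet_Ioo
  have hφ : Measurable φ := Measurable.indicator (by fun_prop) measurableSet_Icc
  calc _ ≤ ∫⁻ w in {w : ℝ × ℝ | w.1 + w.2 ∈ Set.Icc α (α + h)},
          (Set.Ioo s t ×ˢ Set.Ioo x y).indicator (fun w => C * φ (w.1 + w.2)) w := by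
        refine setLIntegral_mono' hstrip fun w (hw : w.1 + w.2 ∈ Set.Icc α (α + h)) => ?_
        refine (kappaKerE_mul_potential_mul_kappaKerE_le hc (hq w (hα.trans hw.1))).trans_eq ?_
        refine Set.indicator_eq_indicator Iff.rfl ?_
        simp only [φ, Set.indicator_of_mem hw, m, C]
    _ ≤ C * ∫⁻ w in Set.Ioo s t ×ˢ Set.Ioo x y, φ (w.1 + w.2) := by
        refine (setLIntegral_le_lintegral _ _).trans_eq ?_
        rw [lintegral_indicator hbox, lintegral_const_mul _ (by fun_prop)]
    _ ≤ C * ∫⁻ v, ENNReal.ofReal (m v) * φ v := by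
        gcongr
        exact setLIntegral_Ioo_prod_Ioo_comp_add_le hφ
    _ = C * ∫⁻ v in Set.Icc α (α + h),
          ENNReal.ofReal (m v) * ENNReal.ofReal (v ^ (-p) * m v ^ (-(1 + 1 / 2 : ℝ))) := by
        rw [← lintegral_indicator measurableSet_Icc]
        simp only [φ, Set.indicator_mul_right]
    _ ≤ C * ENNReal.ofReal ((eulerBeta (1 - p - 1 / 2) 1 + eulerBeta (1 - 1 / 2) (1 - p))
          * h ^ (1 - p - 1 / 2)) := by
        gcongr
        exact setLIntegral_Icc_min_mul_rpow_neg_le hp (by norm_num) (by linarith) hα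
    _ = _ := by
        rw [show 1 - p - 1 / 2 = 1 / 2 - p by ring, sub_half, mul_right_comm,
          ← ENNReal.ofReal_mul (by positivity), ← mul_assoc]

end PotentialKernel

section StripLevel

/-- The number, counted downwards from `0`, of the slice of the plane between consecutive level
lines `u + z = n * h`, `n < k`, that contains `w`. The truncations in `⌊·⌋₊` and in the subtraction
make the slice `0` unbounded above and the slice `k - 1` unbounded below. -/
noncomputable def stripLevel (h : ℝ) (k : ℕ) (w : ℝ × ℝ) : ℕ :=
  k - 1 - ⌊(w.1 + w.2) / h⌋₊

variable {h : ℝ} {k : ℕ} {w w' : ℝ × ℝ}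

theorem measurable_stripLevel (h : ℝ) (k : ℕ) : Measurable (stripLevel h k) :=
  (measurable_from_top (f := fun n => k - 1 - n)).comp
    (((measurable_fst.add measurable_snd).div_const h).nat_floor)

theorem stripLevel_anti (hh : 0 ≤ h) (hw : w.1 + w.2 ≤ w'.1 + w'.2) :
    stripLevel h k w' ≤ stripLevel h k w :=
  Nat.sub_le_sub_left (Nat.floor_mono (div_le_div_of_nonneg_right hw hh)) _

theorem stripLevel_le_of_kappaKerE_ne_zero (hh : 0 ≤ h) (hne : kappaKerE w.1 w.2 w'.1 w'.2 ≠ 0) :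
    stripLevel h k w' ≤ stripLevel h k w :=
  have hlt := lt_and_lt_of_kappaKerE_ne_zero hne
  stripLevel_anti hh (add_le_add hlt.1.le hlt.2.le)

theorem stripLevel_lt_self (hk : 1 ≤ k) : stripLevel h k w < k := by
  unfold stripLevel
  omega

theorem stripLevel_lt_of_le_add {j : ℕ} (hh : 0 < h) (hj : 1 ≤ j) (hjk : j ≤ k)
    (hw : (k - j : ℝ) * h ≤ w.1 + w.2) : stripLevel h k w < j := by
  have hfloor : k - j ≤ ⌊(w.1 + w.2) / h⌋₊ := by
    apply Nat.le_floor
    rwa [Nat.cast_sub hjk, le_div_iff₀ hh]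
  unfold stripLevel
  omega

theorem add_mem_Icc_of_stripLevel (hh : 0 < h) (hw : 0 ≤ w.1 + w.2) (hwk : w.1 + w.2 < k * h) :
    w.1 + w.2 ∈ Set.Icc ((k - 1 - stripLevel h k w : ℕ) * h)
      ((k - 1 - stripLevel h k w : ℕ) * h + h) := by
  have hfloor_lt : ⌊(w.1 + w.2) / h⌋₊ < k :=
    (Nat.floor_lt (by positivity)).2 ((div_lt_iff₀ hh).2 hwk)
  have hfloor : k - 1 - stripLevel h k w = ⌊(w.1 + w.2) / h⌋₊ := by
    unfold stripLevel
    omega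
  rw [hfloor, ← add_one_mul]
  exact ⟨(le_div_iff₀ hh).1 (Nat.floor_le (by positivity)),
    ((div_lt_iff₀ hh).1 (Nat.lt_floor_add_one _)).le⟩

theorem setLIntegral_stripLevel_kappaKerE_mul_le {p c t y : ℝ} {q : ℝ × ℝ → ℝ} (hp : 0 ≤ p)
    (hp' : p < 1 / 2) (hc : 0 ≤ c)
    (hq : ∀ u z : ℝ, 0 < u → 0 < z → q (u, z) ≤ c * (u + z) ^ (-p))
    (hq_zero : ∀ u z : ℝ, u ≤ 0 ∨ z ≤ 0 → q (u, z) = 0) (hh : 0 < h) (hty : t + y ≤ k * h)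
    (n : ℕ) (s x : ℝ) :
    ∫⁻ w in stripLevel h k ⁻¹' {n},
        kappaKerE s x w.1 w.2 * ENNReal.ofReal (q w) * kappaKerE w.1 w.2 t y ≤
      ENNReal.ofReal (2 * √2 * c * (eulerBeta (1 / 2 - p) 1 + eulerBeta (1 / 2) (1 - p))
        * h ^ (1 / 2 - p)) * kappaKerE s x t y := by
  have hq_le (w : ℝ × ℝ) (hw : 0 ≤ w.1 + w.2) : q w ≤ c * (w.1 + w.2) ^ (-p) := by
    by_cases hpos : 0 < w.1 ∧ 0 < w.2
    · exact hq w.1 w.2 hpos.1 hpos.2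
    · rw [not_and_or, not_lt, not_lt] at hpos
      exact (hq_zero w.1 w.2 hpos).trans_le (by positivity)
  set F : ℝ × ℝ → ℝ≥0∞ :=
    fun w => kappaKerE s x w.1 w.2 * ENNReal.ofReal (q w) * kappaKerE w.1 w.2 t y
  set strip := {w : ℝ × ℝ | w.1 + w.2 ∈ Set.Icc ((k - 1 - n : ℕ) * h) ((k - 1 - n : ℕ) * h + h)}
  have hlevel : MeasurableSet (stripLevel h k ⁻¹' {n}) :=
    measurable_stripLevel h k (measurableSet_singleton n)
  have hstrip : MeasurableSet strip := measurable_add measurableSet_Icc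
  have mem_strip (w : ℝ × ℝ) (hw : stripLevel h k w = n) (hF : F w ≠ 0) : w ∈ strip := by
    obtain ⟨hut, hzy⟩ := lt_and_lt_of_kappaKerE_ne_zero (right_ne_zero_of_mul hF)
    have hqw : q w ≠ 0 := fun h0 => hF (by simp [F, h0])
    have hu : 0 < w.1 := not_le.1 fun hu => hqw (hq_zero w.1 w.2 (.inl hu))
    have hz : 0 < w.2 := not_le.1 fun hz => hqw (hq_zero w.1 w.2 (.inr hz))
    subst hw
    exact add_mem_Icc_of_stripLevel hh (by positivity) (by linarith)
  calc ∫⁻ w in stripLevel h k ⁻¹' {n}, F w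
      ≤ ∫⁻ w in strip, F w := by
        rw [← lintegral_indicator hlevel, ← lintegral_indicator hstrip]
        refine lintegral_mono fun w => Set.indicator_apply_le fun hw => ?_
        by_cases hF : F w = 0
        · simp [hF]
        · rw [Set.indicator_of_mem (mem_strip w hw hF)]
    _ ≤ _ := setLIntegral_strip_kappaKerE_mul_le hp hp' hc (by positivity) hq_le

end StripLevel

/-- Estimate for the Schrödinger perturbation series of the potential kernel `κ` of two
independent 1/2-stable subordinators by `q ≤ c(u+z)^{−p}`: on each slice
`S_j = A_j \ A_{j−1}` determined by the level lines `u + z = (k−j)h`,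
`Σ_m K^m f ≤ (1/(1−η))^j κ(s,x,t,y)`, where `f(s,x) = κ(s,x,t,y)` and
`η = 2√2 c [B(1/2−p,1) + B(1/2,1−p)] h^{1/2−p} < 1`. -/
theorem stmt_19 (p c : ℝ) (hp0 : 0 < p) (hp1 : p < 1/2) (hc : 0 < c)
    (q : ℝ × ℝ → ℝ) (hqmeas : Measurable q) (hq0 : ∀ w, 0 ≤ q w)
    (hqbd : ∀ u z : ℝ, 0 < u → 0 < z → q (u, z) ≤ c * (u + z) ^ (-p))
    (hqvan : ∀ u z : ℝ, u ≤ 0 ∨ z ≤ 0 → q (u, z) = 0)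
    (t y : ℝ) (hty : 0 < t + y)
    (h : ℝ) (hh : 0 < h)
    (η : ℝ)
    (hηdef : η = 2 * Real.sqrt 2 * c * (eulerBeta (1/2 - p) 1 + eulerBeta (1/2) (1 - p))
        * h ^ (1/2 - p))
    (hη : η < 1)
    (k : ℕ) (hk : 1 ≤ k) (hk1 : ((k:ℝ) - 1) * h ≤ t + y) (hk2 : t + y < (k:ℝ) * h)
    (A : ℕ → Set (ℝ × ℝ))
    (hA : ∀ j, A j = if j = 0 then ∅ else if j = k then Set.univ
        else {w : ℝ × ℝ | ((k:ℝ) - j) * h ≤ w.1 + w.2}) :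
    ∀ j, 1 ≤ j → j ≤ k → ∀ s x : ℝ, (s, x) ∈ A j \ A (j - 1) → s < t → x < y →
      ∑' m : ℕ, (kappaOp q)^[m] (fun w => kappaKerE w.1 w.2 t y) (s, x)
        ≤ ENNReal.ofReal ((1 / (1 - η)) ^ j) * kappaKerE s x t y := by
  intro j hj hjk s x hsx _ _
  have hη_nonneg : 0 ≤ η := by
    have hB₁ := eulerBeta_nonneg (1 / 2 - p) 1
    have hB₂ := eulerBeta_nonneg (1 / 2) (1 - p)
    rw [hηdef]
    positivity
  have hlevel_lt : stripLevel h k (s, x) < j := by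
    have hmem := hsx.1
    rw [hA, if_neg (by omega)] at hmem
    obtain rfl | hne := eq_or_ne j k
    · exact stripLevel_lt_self hj
    · rw [if_neg hne] at hmem
      exact stripLevel_lt_of_le_add hh hj hjk hmem
  have hseries := tsum_iterate_kernelOp_le_of_level (measurable_stripLevel h k)
    (k := fun w w' => kappaKerE w.1 w.2 w'.1 w'.2 * ENNReal.ofReal (q w'))
    (fun w w' hne => stripLevel_le_of_kappaKerE_ne_zero hh.le (left_ne_zero_of_mul hne))
    (ENNReal.ofReal_lt_one.2 hη) (f := fun w => kappaKerE w.1 w.2 t y) (fun n w => hηdef ▸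
      setLIntegral_stripLevel_kappaKerE_mul_le hp0.le hp1 hc.le hqbd hqvan hh hk2.le n w.1 w.2)
    (s, x)
  refine hseries.trans (mul_le_mul_left ?_ _)
  rw [ofReal_one_div_one_sub_pow hη_nonneg hη]
  exact pow_le_pow_right₀ (ENNReal.one_le_inv.2 tsub_le_self) hlevel_lt
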